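/- For all finite subsets U ⊆ V ⊆ S and every w ∈ S with w ∉ V, the difference of the marginal gains satisfies (G(U ∪ {w}) − G(U)) − (G(V ∪ {w}) − G(V)) = λ · Σ_{v ∈ V \ U} max(γ(v,w), γ(w,v)). -/

import Mathlib

/-- The strategic-state objective of the paper (equation (3)):
`G(U) = Σ_{g ∈ U} C(g) − λ · Σ_{{u,v} unordered pair of distinct elements of U} max(γ(u,v), γ(v,u))`.
Since `max (γ u v) (γ v u)` is symmetric in `u, v`, the sum over unordered pairs of distinct
elements equals half the sum over ordered pairs of distinct elements. -/
noncomputable def stratObj {S : Type*} [DecidableEq S] (C : S → ℝ) (γ : S → S → ℝ)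
    (lam : ℝ) (U : Finset S) : ℝ :=
  (∑ g ∈ U, C g) - lam * ((∑ u ∈ U, ∑ v ∈ U.erase u, max (γ u v) (γ v u)) / 2)

theorem stratObj_gain_aux {S : Type*} [DecidableEq S] (C : S → ℝ) (γ : S → S → ℝ)
    (lam : ℝ) (U : Finset S) (w : S) (hw : w ∉ U) :
    stratObj C γ lam (insert w U) - stratObj C γ lam U =
      C w - lam * ∑ v ∈ U, max (γ v w) (γ w v) := by
  have h1 : ∑ u ∈ U, ∑ v ∈ (insert w U).erase u, max (γ u v) (γ v u) =
      ∑ u ∈ U, max (γ u w) (γ w u) + ∑ u ∈ U, ∑ v ∈ U.erase u, max (γ u v) (γ v u) := by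
    rw [← Finset.sum_add_distrib]
    refine Finset.sum_congr rfl fun u hu => ?_
    have hne : w ≠ u := fun h => hw (h ▸ hu)
    rw [Finset.erase_insert_of_ne hne, Finset.sum_insert (by simp [hw])]
  have h2 : ∑ v ∈ U, max (γ w v) (γ v w) = ∑ v ∈ U, max (γ v w) (γ w v) :=
    Finset.sum_congr rfl fun v _ => max_comm _ _
  unfold stratObj
  rw [Finset.sum_insert hw, Finset.sum_insert hw, Finset.erase_insert hw, h1, h2]
  ring

/-- Equation (6) of the paper: the difference of the marginal gains of `w` at `U` and at `V`
is exactly `λ` times the sum of the pairwise distances over `V \ U`. -/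
theorem stratObj_gain_difference {S : Type*} [DecidableEq S] (C : S → ℝ) (γ : S → S → ℝ)
    (lam : ℝ) (U V : Finset S) (hUV : U ⊆ V) (w : S) (hw : w ∉ V) :
    (stratObj C γ lam (insert w U) - stratObj C γ lam U) -
        (stratObj C γ lam (insert w V) - stratObj C γ lam V) =
      lam * ∑ v ∈ V \ U, max (γ v w) (γ w v) := by
  rw [stratObj_gain_aux C γ lam U w (fun h => hw (hUV h)), stratObj_gain_aux C γ lam V w hw,
    ← Finset.sum_sdiff hUV]
  ring
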